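/- arXiv:1502.03724 — 2 statements merged into one kernel-verified Lean document; each statement's English description precedes it below -/
import Mathlib

section
/- Let N ≥ 1 and let R = (1/2)(P_M − P_E) be the Markov R-matrix on gl(N,ℝ). Then for all N×N real matrices A and B, the R-deformed bracket reduces to the bracket of the M-projections: ⁅R(A), B⁆ + ⁅A, R(B)⁆ = ⁅P_M(A), P_M(B)⁆. -/
/-- For the Markov R-matrix `R = (1/2)(P_M - P_E)` on `gl(N,ℝ)`,
the R-deformed bracket reduces to the bracket of the `M`-projections:
`⁅R(A), B⁆ + ⁅A, R(B)⁆ = ⁅P_M(A), P_M(B)⁆`. -/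
theorem markov_R_bracket_reduction (N : ℕ) (hN : 1 ≤ N)
    (PE PM R : Matrix (Fin N) (Fin N) ℝ → Matrix (Fin N) (Fin N) ℝ)
    (hPE : ∀ A, PE A = Matrix.diagonal (fun j => ∑ i, A i j))
    (hPM : ∀ A, PM A = A - PE A)
    (hR : ∀ A, R A = (1 / 2 : ℝ) • (PM A - PE A)) :
    ∀ A B : Matrix (Fin N) (Fin N) ℝ,
      ⁅R A, B⁆ + ⁅A, R B⁆ = ⁅PM A, PM B⁆ := by
  intro A B
  have hc : PE A * PE B = PE B * PE A := by
    rw [hPE, hPE, Matrix.diagonal_mul_diagonal, Matrix.diagonal_mul_diagonal]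
    congr 1
    funext j
    exact mul_comm _ _
  have hR' : ∀ X, R X = (1 / 2 : ℝ) • X - PE X := by
    intro X
    rw [hR, hPM]
    module
  rw [hR', hR', hPM, hPM]
  simp only [Ring.lie_def, sub_mul, mul_sub, smul_mul_assoc, mul_smul_comm, hc]
  module
end

section
/- Let N ≥ 1 and let R = (1/2)(P_M − P_E) be the Markov R-matrix on gl(N,ℝ). Then the deformed bracket [A,B]_R := ⁅R(A), B⁆ + ⁅A, R(B)⁆ defines a Lie bracket on the N×N real matrices: it is bilinear, antisymmetric, and satisfies the Jacobi identity [[A,B]_R, C]_R + [[B,C]_R, A]_R + [[C,A]_R, B]_R = 0 for all A, B, C. -/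
/-- The R-deformed bracket `[A,B]_R := ⁅R(A), B⁆ + ⁅A, R(B)⁆` for the
Markov R-matrix is a Lie bracket on `N × N` real matrices: bilinear, antisymmetric,
and satisfying the Jacobi identity. -/
theorem markov_R_bracket_is_lie (N : ℕ) (hN : 1 ≤ N)
    (PE PM R : Matrix (Fin N) (Fin N) ℝ → Matrix (Fin N) (Fin N) ℝ)
    (hPE : ∀ A, PE A = Matrix.diagonal (fun j => ∑ i, A i j))
    (hPM : ∀ A, PM A = A - PE A)
    (hR : ∀ A, R A = (1 / 2 : ℝ) • (PM A - PE A))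
    (br : Matrix (Fin N) (Fin N) ℝ → Matrix (Fin N) (Fin N) ℝ → Matrix (Fin N) (Fin N) ℝ)
    (hbr : ∀ A B, br A B = ⁅R A, B⁆ + ⁅A, R B⁆) :
    (∀ (c : ℝ) (A A' B), br (c • A + A') B = c • br A B + br A' B) ∧
    (∀ (c : ℝ) (A B B'), br A (c • B + B') = c • br A B + br A B') ∧
    (∀ A B, br A B = - br B A) ∧
    (∀ A B C, br (br A B) C + br (br B C) A + br (br C A) B = 0) := by
  have hlin : ∀ (c : ℝ) (A A' : Matrix (Fin N) (Fin N) ℝ),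
      PE (c • A + A') = c • PE A + PE A' := by
    intro c A A'
    simp only [hPE]
    ext i j
    by_cases h : i = j
    · subst h
      simp [Finset.sum_add_distrib, Finset.mul_sum]
    · simp [h]
  have hcomm : ∀ A B, PE A * PE B = PE B * PE A := by
    intro A B
    simp only [hPE, Matrix.diagonal_mul_diagonal, mul_comm]
  have hb : ∀ A B, br A B = ⁅PM A, PM B⁆ := by
    intro A B
    have h := hcomm A B
    have hA : R A = (1 / 2 : ℝ) • A - PE A := by rw [hR, hPM]; module
    have hB : R B = (1 / 2 : ℝ) • B - PE B := by rw [hR, hPM]; module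
    rw [hbr, hA, hB, hPM, hPM]
    simp only [Ring.lie_def, sub_mul, mul_sub, smul_mul_assoc, mul_smul_comm]
    rw [h]
    module
  have hcol : ∀ A j, ∑ i, PM A i j = 0 := by
    intro A j
    rw [hPM, hPE]
    simp [Matrix.diagonal_apply]
  have hcolmul : ∀ (A B : Matrix (Fin N) (Fin N) ℝ) j, ∑ i, (PM A * B) i j = 0 := by
    intro A B j
    simp only [Matrix.mul_apply]
    rw [Finset.sum_comm]
    simp [← Finset.sum_mul, hcol]
  have hPMbr : ∀ A B, PM (br A B) = br A B := by
    intro A B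
    have h0 : PE (br A B) = 0 := by
      rw [hPE, hb, Ring.lie_def]
      simp [hcolmul]
    rw [hPM, h0, sub_zero]
  have hMlin : ∀ (c : ℝ) (A A' : Matrix (Fin N) (Fin N) ℝ),
      PM (c • A + A') = c • PM A + PM A' := by
    intro c A A'
    simp only [hPM, hlin]
    module
  refine ⟨?_, ?_, ?_, ?_⟩
  · intro c A A' B
    simp only [hb, hMlin, Ring.lie_def, add_mul, mul_add, smul_mul_assoc, mul_smul_comm]
    module
  · intro c A B B'
    simp only [hb, hMlin, Ring.lie_def, add_mul, mul_add, smul_mul_assoc, mul_smul_comm]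
    module
  · intro A B
    simp only [hb, Ring.lie_def]
    abel
  · intro A B C
    rw [hb (br A B), hb (br B C), hb (br C A)]
    simp only [hPMbr]
    simp only [hb, Ring.lie_def]
    noncomm_ring
end
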